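/- For every matrix M ∈ W(E₈) there exists a finite list g₁, …, g_m of matrices, each belonging to the 23-element gate set Σ_D, such that M = g₁ ⋯ g_m and at most 120 of the factors g_i are Toffoli gates (i.e., of the form CCX_{j,k}). -/

import Mathlib

/-!
The group `W(E₈)` is generated by the reflections `1 - r rᵀ` in the 240 roots `r` (the vectors of
norm `2` in the lattice), and two facts give the bound.

* A reflection costs one Toffoli gate (`good_of_mem_roots`). The Toffoli gate `CCX₀₁` is the
  reflection in `e₁₁₀ - e₁₁₁`. The remaining gates used here are symmetric involutions, so
  conjugating by such a gate `g` turns the reflection in `r` into the reflection in `g r`.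
  These gates act transitively on the roots up to sign: `X`, `CX`, `Z` connect all roots
  `±e_x ± e_y`, the diagonal gates `Z`, `CZ` produce every even sign pattern and so connect all
  roots with half-integer coordinates, and `K₀₁` maps the all-halves root to `e₀₀₀ + e₀₀₁`.

* Every element of `W(E₈)` is a product of at most `32` reflections (`exists_reflections`). Eight
  spanning roots `r₁, …, r₈` (`chain`) are fixed one after another. If `M` fixes
  `r₁, …, r_{k-1}` and `M r_k ≠ r_k`, then some root `α` orthogonal to `r₁, …, r_{k-1}` has
  `(α·M r_k)(α·r_k) < 0`; passing from `M` to `s_α M` keeps the earlier roots fixed and increases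
  the integer `M r_k · r_k`, which lies between `-2` and `2`. So each `r_k` costs at most four
  reflections. The existence of `α` is a finite check over the 240 roots.
-/

open Matrix

/-- Basis index: a bit string `x₀x₁x₂`. -/
abbrev B3 : Type := Fin 3 → Fin 2

/-- Flip bit `j` of a bit string. -/
def flipBit (j : Fin 3) (x : B3) : B3 := Function.update x j (1 - x j)

/-- The gate `X_j`, flipping bit `j`. -/
def Xmat (j : Fin 3) : Matrix B3 B3 ℚ :=
  Matrix.of fun x y => if x = flipBit j y then 1 else 0

/-- The gate `CX_{j,k}`, flipping bit `k` exactly when bit `j` is `1`. -/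
def CXmat (j k : Fin 3) : Matrix B3 B3 ℚ :=
  Matrix.of fun x y => if x = (if y j = 1 then flipBit k y else y) then 1 else 0

/-- The element of `{0,1,2}` other than `j` and `k` (for `j ≠ k`). -/
def otherIdx (j k : Fin 3) : Fin 3 := -(j + k)

/-- The Toffoli gate `CCX_{j,k}`, flipping the remaining bit exactly when bits `j, k` are `1`. -/
def CCXmat (j k : Fin 3) : Matrix B3 B3 ℚ :=
  Matrix.of fun x y =>
    if x = (if y j = 1 ∧ y k = 1 then flipBit (otherIdx j k) y else y) then 1 else 0

/-- The gate `Z_j`, negating basis vectors whose bit `j` is `1`. -/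
def Zmat (j : Fin 3) : Matrix B3 B3 ℚ :=
  Matrix.of fun x y => if x = y then (if x j = 1 then -1 else 1) else 0

/-- The gate `CZ_{j,k}`, negating basis vectors whose bits `j` and `k` are both `1`. -/
def CZmat (j k : Fin 3) : Matrix B3 B3 ℚ :=
  Matrix.of fun x y => if x = y then (if x j = 1 ∧ x k = 1 then -1 else 1) else 0

/-- The swap gate `σ_{j,k}`, exchanging bits `j` and `k`. -/
def swapMat (j k : Fin 3) : Matrix B3 B3 ℚ :=
  Matrix.of fun x y => if ∀ i, x i = y (Equiv.swap j k i) then 1 else 0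

/-- The gate `K_{j,k} = H_j ∘ H_k`, applying the Hadamard gate to qubits `j` and `k`. -/
def Kmat (j k : Fin 3) : Matrix B3 B3 ℚ :=
  Matrix.of fun x y =>
    if ∀ i, i ≠ j → i ≠ k → x i = y i then
      (1 / 2) * (-1) ^ ((x j).val * (y j).val + (x k).val * (y k).val)
    else 0

/-- A rational number is dyadic if it is of the form `a / 2 ^ k`. -/
def IsDyadic (q : ℚ) : Prop := ∃ (a : ℤ) (k : ℕ), q = (a : ℚ) / 2 ^ k

/-- Membership in `O(8, 𝔻)`: orthogonal with dyadic entries. -/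
def InO8D (M : Matrix B3 B3 ℚ) : Prop := Mᵀ * M = 1 ∧ ∀ i j, IsDyadic (M i j)

/-- The `E₈` lattice. -/
def E8 : Set (B3 → ℚ) :=
  {v | ((∀ i, ∃ n : ℤ, v i = (n : ℚ)) ∨ (∀ i, ∃ n : ℤ, v i = (n : ℚ) + 1 / 2)) ∧
        ∃ m : ℤ, (∑ i, v i) = 2 * (m : ℚ)}

/-- Membership in `W(E₈)`. -/
def InWE8 (M : Matrix B3 B3 ℚ) : Prop := InO8D M ∧ Set.BijOn M.mulVec E8 E8

/-- The 23-element gate set `Σ_D`. -/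
def SigmaD : Set (Matrix B3 B3 ℚ) :=
  {M | (∃ j, M = Xmat j) ∨ (∃ j k, j ≠ k ∧ M = CXmat j k) ∨
       (∃ j k, j < k ∧ M = CCXmat j k) ∨ (∃ j, M = Zmat j) ∨
       (∃ j k, j < k ∧ M = CZmat j k) ∨ M = Kmat 0 1 ∨ M = Kmat 1 2 ∨
       (∃ j k, j < k ∧ M = swapMat j k)}

/-- A matrix is a Toffoli gate if it is of the form `CCX_{j,k}` with `j < k`. -/
def IsToffoli (M : Matrix B3 B3 ℚ) : Prop := ∃ j k : Fin 3, j < k ∧ M = CCXmat j k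

instance (M : Matrix B3 B3 ℚ) : Decidable (IsToffoli M) := by
  unfold IsToffoli; infer_instance

/-! ### Roots in doubled integer coordinates -/

/-- Twice a vector with half-integral coordinates; the field `aᵢ` belongs to the bit string that
is the binary expansion of `i`. -/
@[ext] structure V8 where
  a0 : ℤ
  a1 : ℤ
  a2 : ℤ
  a3 : ℤ
  a4 : ℤ
  a5 : ℤ
  a6 : ℤ
  a7 : ℤ
deriving DecidableEq

namespace V8

/-- The coordinate at a bit string. -/
def coord (v : V8) (x : B3) : ℤ :=
  match x 0, x 1, x 2 with
  | 0, 0, 0 => v.a0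
  | 0, 0, 1 => v.a1
  | 0, 1, 0 => v.a2
  | 0, 1, 1 => v.a3
  | 1, 0, 0 => v.a4
  | 1, 0, 1 => v.a5
  | 1, 1, 0 => v.a6
  | 1, 1, 1 => v.a7

/-- The rational vector whose double is `v`. -/
def toVec (v : V8) : B3 → ℚ := fun x => (v.coord x : ℚ) / 2

/-- The standard inner product of the doubled coordinates, four times that of the vectors. -/
def dot (v w : V8) : ℤ :=
  v.a0 * w.a0 + v.a1 * w.a1 + v.a2 * w.a2 + v.a3 * w.a3 +
    v.a4 * w.a4 + v.a5 * w.a5 + v.a6 * w.a6 + v.a7 * w.a7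

/-- Coordinatewise negation. -/
def neg (v : V8) : V8 :=
  ⟨-v.a0, -v.a1, -v.a2, -v.a3, -v.a4, -v.a5, -v.a6, -v.a7⟩

/-- The elements of `c` whose square is at most `n`. -/
def sel (c : List ℤ) (n : ℤ) : List ℤ := c.filter fun a => decide (a * a ≤ n)

/-- The vectors with coordinates in `c` and sum of squares at most `8`. Bounding every partial sum
keeps the enumeration short. -/
def cube (c : List ℤ) : List V8 :=
  (sel c 8).flatMap fun a0 =>
  (sel c (8 - a0 * a0)).flatMap fun a1 =>
  (sel c (8 - a0 * a0 - a1 * a1)).flatMap fun a2 =>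
  (sel c (8 - a0 * a0 - a1 * a1 - a2 * a2)).flatMap fun a3 =>
  (sel c (8 - a0 * a0 - a1 * a1 - a2 * a2 - a3 * a3)).flatMap fun a4 =>
  (sel c (8 - a0 * a0 - a1 * a1 - a2 * a2 - a3 * a3 - a4 * a4)).flatMap fun a5 =>
  (sel c (8 - a0 * a0 - a1 * a1 - a2 * a2 - a3 * a3 - a4 * a4 - a5 * a5)).flatMap fun a6 =>
  (sel c (8 - a0 * a0 - a1 * a1 - a2 * a2 - a3 * a3 - a4 * a4 - a5 * a5 - a6 * a6)).map fun a7 =>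
    ⟨a0, a1, a2, a3, a4, a5, a6, a7⟩

/-- Norm `2` and even coordinate sum, in doubled coordinates. -/
def isRoot (v : V8) : Bool :=
  decide (v.dot v = 8) &&
    decide ((v.a0 + v.a1 + v.a2 + v.a3 + v.a4 + v.a5 + v.a6 + v.a7) % 4 = 0)

/-- The 112 roots with integer coordinates. -/
def intRoots : List V8 := (cube [-2, 0, 2]).filter isRoot

/-- The 128 roots with half-integer coordinates. -/
def halfRoots : List V8 := (cube [-1, 1]).filter isRoot

/-- The 240 roots of `E₈`. -/
def roots : List V8 := intRoots ++ halfRoots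

end V8

open V8

theorem sum_B3 {A : Type*} [AddCommMonoid A] (f : B3 → A) :
    ∑ x, f x = f ![0, 0, 0] + f ![0, 0, 1] + f ![0, 1, 0] + f ![0, 1, 1] +
      f ![1, 0, 0] + f ![1, 0, 1] + f ![1, 1, 0] + f ![1, 1, 1] := by
  have h : (Finset.univ : Finset B3) = {![0, 0, 0], ![0, 0, 1], ![0, 1, 0], ![0, 1, 1],
      ![1, 0, 0], ![1, 0, 1], ![1, 1, 0], ![1, 1, 1]} := by decide
  rw [h]
  repeat rw [Finset.sum_insert (by decide)]
  rw [Finset.sum_singleton]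
  simp only [add_assoc]

theorem forall_B3 {p : B3 → Prop} (h : ∀ a b c : Fin 2, p ![a, b, c]) (x : B3) : p x := by
  have hx : x = ![x 0, x 1, x 2] := by
    ext i; fin_cases i <;> rfl
  rw [hx]; exact h _ _ _

theorem toVec_dot (v w : V8) : v.toVec ⬝ᵥ w.toVec = (v.dot w : ℚ) / 4 := by
  simp only [dotProduct, sum_B3, toVec, coord, V8.dot, Matrix.cons_val]
  push_cast
  ring

theorem toVec_neg (v : V8) : v.neg.toVec = -v.toVec := by
  ext x
  revert x
  refine forall_B3 ?_
  intro a b c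
  fin_cases a <;> fin_cases b <;> fin_cases c <;>
    simp [toVec, coord, V8.neg, neg_div]

theorem mem_of_mem_cube {c : List ℤ} {v : V8} (h : v ∈ cube c) :
    v.a0 ∈ c ∧ v.a1 ∈ c ∧ v.a2 ∈ c ∧ v.a3 ∈ c ∧ v.a4 ∈ c ∧ v.a5 ∈ c ∧ v.a6 ∈ c ∧ v.a7 ∈ c := by
  cases v
  simp only [cube, sel, List.mem_flatMap, List.mem_map, List.mem_filter, V8.mk.injEq] at h
  obtain ⟨_, h0, _, h1, _, h2, _, h3, _, h4, _, h5, _, h6, _, h7, rfl, rfl, rfl, rfl, rfl, rfl,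
    rfl, rfl⟩ := h
  exact ⟨h0.1, h1.1, h2.1, h3.1, h4.1, h5.1, h6.1, h7.1⟩

theorem mem_cube {c : List ℤ} {v : V8} (hv : v.isRoot = true)
    (h : v.a0 ∈ c ∧ v.a1 ∈ c ∧ v.a2 ∈ c ∧ v.a3 ∈ c ∧ v.a4 ∈ c ∧ v.a5 ∈ c ∧ v.a6 ∈ c ∧ v.a7 ∈ c) :
    v ∈ cube c := by
  obtain ⟨a0, a1, a2, a3, a4, a5, a6, a7⟩ := v
  simp only [isRoot, Bool.and_eq_true, decide_eq_true_eq] at hv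
  obtain ⟨hv, -⟩ := hv
  simp only [V8.dot] at hv
  obtain ⟨h0, h1, h2, h3, h4, h5, h6, h7⟩ := h
  have n0 := mul_self_nonneg a0
  have n1 := mul_self_nonneg a1
  have n2 := mul_self_nonneg a2
  have n3 := mul_self_nonneg a3
  have n4 := mul_self_nonneg a4
  have n5 := mul_self_nonneg a5
  have n6 := mul_self_nonneg a6
  have n7 := mul_self_nonneg a7
  simp only [cube, sel, List.mem_flatMap, List.mem_map, List.mem_filter, decide_eq_true_eq]
  refine ⟨a0, ⟨h0, ?_⟩, a1, ⟨h1, ?_⟩, a2, ⟨h2, ?_⟩, a3, ⟨h3, ?_⟩, a4, ⟨h4, ?_⟩, a5, ⟨h5, ?_⟩,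
    a6, ⟨h6, ?_⟩, a7, ⟨h7, ?_⟩, rfl⟩ <;> linarith

/-! ### The lattice `E₈` -/

/-- The integral and the half-integral vectors of `E₈` written uniformly: `c/2 + a` with `a`
integral of even coordinate sum. -/
theorem mem_E8_iff {v : B3 → ℚ} :
    v ∈ E8 ↔ ∃ (c : ℤ) (a : B3 → ℤ) (s : ℤ), (∀ x, v x = c / 2 + a x) ∧ ∑ x, a x = 2 * s := by
  constructor
  · rintro ⟨h | h, m, hm⟩
    · choose n hn using h
      refine ⟨0, n, m, by simpa using hn, ?_⟩
      simp only [hn] at hm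
      exact_mod_cast hm
    · choose n hn using h
      refine ⟨1, n, m - 2, fun x => by rw [hn]; push_cast; ring, ?_⟩
      simp only [hn, sum_B3] at hm
      simp only [sum_B3]
      have : ((n ![0, 0, 0] + n ![0, 0, 1] + n ![0, 1, 0] + n ![0, 1, 1] + n ![1, 0, 0] +
        n ![1, 0, 1] + n ![1, 1, 0] + n ![1, 1, 1] : ℤ) : ℚ) = (2 * (m - 2) : ℤ) := by
        push_cast
        linarith
      exact_mod_cast this
  · rintro ⟨c, a, s, hv, hs⟩
    have hsq : ∑ x, (a x : ℚ) = 2 * s := by exact_mod_cast hs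
    have hsum : ∑ x, v x = 2 * ((2 * c + s : ℤ) : ℚ) := by
      simp only [hv, sum_B3] at hsq ⊢
      push_cast
      linarith
    refine ⟨?_, _, hsum⟩
    rcases Int.even_or_odd' c with ⟨q, rfl | rfl⟩
    · left
      intro x
      refine ⟨q + a x, ?_⟩
      rw [hv]; push_cast; ring
    · right
      intro x
      refine ⟨q + a x, ?_⟩
      rw [hv]; push_cast; ring

theorem E8_dot_int {v w : B3 → ℚ} (hv : v ∈ E8) (hw : w ∈ E8) : ∃ k : ℤ, v ⬝ᵥ w = k := by
  obtain ⟨c, a, s, hv, hs⟩ := mem_E8_iff.1 hv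
  obtain ⟨d, b, t, hw, ht⟩ := mem_E8_iff.1 hw
  refine ⟨2 * c * d + c * t + d * s + ∑ x, a x * b x, ?_⟩
  have hs' : ∑ x, (a x : ℚ) = 2 * s := by exact_mod_cast hs
  have ht' : ∑ x, (b x : ℚ) = 2 * t := by exact_mod_cast ht
  simp only [dotProduct, hv, hw, sum_B3] at *
  push_cast
  linear_combination (d / 2 : ℚ) * hs' + (c / 2 : ℚ) * ht'

theorem E8_sub_smul {v w : B3 → ℚ} (hv : v ∈ E8) (hw : w ∈ E8) (k : ℤ) :
    v - (k : ℚ) • w ∈ E8 := by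
  obtain ⟨c, a, s, hv, hs⟩ := mem_E8_iff.1 hv
  obtain ⟨d, b, t, hw, ht⟩ := mem_E8_iff.1 hw
  refine mem_E8_iff.2 ⟨c - k * d, fun x => a x - k * b x, s - k * t, fun x => ?_, ?_⟩
  · simp [hv, hw]; ring
  · rw [Finset.sum_sub_distrib, ← Finset.mul_sum, hs, ht]; ring

theorem roots_parity : ∀ v ∈ roots, (v.a1 - v.a0) % 2 = 0 ∧ (v.a2 - v.a0) % 2 = 0 ∧
    (v.a3 - v.a0) % 2 = 0 ∧ (v.a4 - v.a0) % 2 = 0 ∧ (v.a5 - v.a0) % 2 = 0 ∧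
    (v.a6 - v.a0) % 2 = 0 ∧ (v.a7 - v.a0) % 2 = 0 ∧
    (v.a0 + v.a1 + v.a2 + v.a3 + v.a4 + v.a5 + v.a6 + v.a7) % 4 = 0 ∧ v.dot v = 8 := by
  intro v hv
  have key : ∃ e : ℤ, v.isRoot = true ∧ v.a0 % 2 = e ∧ v.a1 % 2 = e ∧ v.a2 % 2 = e ∧
      v.a3 % 2 = e ∧ v.a4 % 2 = e ∧ v.a5 % 2 = e ∧ v.a6 % 2 = e ∧ v.a7 % 2 = e := by
    rcases List.mem_append.1 hv with hv | hv <;> obtain ⟨hc, hr⟩ := List.mem_filter.1 hv <;>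
      obtain ⟨h0, h1, h2, h3, h4, h5, h6, h7⟩ := mem_of_mem_cube hc
    · have h : ∀ a ∈ [(-2 : ℤ), 0, 2], a % 2 = 0 := by decide
      exact ⟨0, hr, h _ h0, h _ h1, h _ h2, h _ h3, h _ h4, h _ h5, h _ h6, h _ h7⟩
    · have h : ∀ a ∈ [(-1 : ℤ), 1], a % 2 = 1 := by decide
      exact ⟨1, hr, h _ h0, h _ h1, h _ h2, h _ h3, h _ h4, h _ h5, h _ h6, h _ h7⟩
  obtain ⟨e, hr, h0, h1, h2, h3, h4, h5, h6, h7⟩ := key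
  simp only [isRoot, Bool.and_eq_true, decide_eq_true_eq] at hr
  refine ⟨?_, ?_, ?_, ?_, ?_, ?_, ?_, hr.2, hr.1⟩ <;> omega

theorem toVec_mem_E8 {v : V8} (hv : v ∈ roots) : v.toVec ∈ E8 := by
  obtain ⟨h1, h2, h3, h4, h5, h6, h7, h8, -⟩ := roots_parity v hv
  have key : ∀ n : ℤ, (n - v.a0) % 2 = 0 → ∃ m, n = v.a0 + 2 * m :=
    fun n h => ⟨(n - v.a0) / 2, by omega⟩
  obtain ⟨m1, h1⟩ := key _ h1
  obtain ⟨m2, h2⟩ := key _ h2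
  obtain ⟨m3, h3⟩ := key _ h3
  obtain ⟨m4, h4⟩ := key _ h4
  obtain ⟨m5, h5⟩ := key _ h5
  obtain ⟨m6, h6⟩ := key _ h6
  obtain ⟨m7, h7⟩ := key _ h7
  refine mem_E8_iff.2 ⟨v.a0, (⟨0, m1, m2, m3, m4, m5, m6, m7⟩ : V8).coord,
    (m1 + m2 + m3 + m4 + m5 + m6 + m7) / 2, ?_, ?_⟩
  · refine forall_B3 ?_
    intro a b c
    fin_cases a <;> fin_cases b <;> fin_cases c <;>
      simp [toVec, coord, h1, h2, h3, h4, h5, h6, h7] <;> ring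
  · simp only [sum_B3, coord, Matrix.cons_val]
    omega

/-- The vectors of norm `2` in `E₈` are the 240 listed roots. -/
theorem exists_root {v : B3 → ℚ} (hv : v ∈ E8) (hn : v ⬝ᵥ v = 2) :
    ∃ w ∈ roots, v = w.toVec := by
  have fill : ∀ n : B3 → ℤ, (∀ x, v x = n x / 2) →
      ∃ w : V8, v = w.toVec ∧ w = ⟨n ![0, 0, 0], n ![0, 0, 1], n ![0, 1, 0], n ![0, 1, 1],
        n ![1, 0, 0], n ![1, 0, 1], n ![1, 1, 0], n ![1, 1, 1]⟩ := by
    intro n hn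
    refine ⟨_, ?_, rfl⟩
    ext x
    rw [hn]
    revert x
    refine forall_B3 ?_
    intro a b c
    fin_cases a <;> fin_cases b <;> fin_cases c <;> simp [toVec, coord]
  obtain ⟨hpar, m, hm⟩ := hv
  have norm_sum : ∀ w : V8, v = w.toVec → w.isRoot = true := by
    rintro w rfl
    rw [toVec_dot] at hn
    have h8 : w.dot w = 8 := by
      have : (w.dot w : ℚ) = 8 := by linarith
      exact_mod_cast this
    have h4 : w.a0 + w.a1 + w.a2 + w.a3 + w.a4 + w.a5 + w.a6 + w.a7 = 4 * m := by
      simp only [sum_B3, toVec, coord, Matrix.cons_val] at hm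
      have : ((w.a0 + w.a1 + w.a2 + w.a3 + w.a4 + w.a5 + w.a6 + w.a7 : ℤ) : ℚ)
          = (4 * m : ℤ) := by
        push_cast; linarith
      exact_mod_cast this
    simp [isRoot, h8, h4]
  rcases hpar with h | h
  · choose n hn' using h
    obtain ⟨w, hw, hwn⟩ := fill (fun x => 2 * n x) (fun x => by rw [hn']; push_cast; ring)
    have hr := norm_sum w hw
    refine ⟨w, List.mem_append_left _ (List.mem_filter.2 ⟨?_, hr⟩), hw⟩
    have hsq : ∑ x, n x * n x = 2 := by
      simp only [dotProduct, hn'] at hn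
      exact_mod_cast hn
    have hmem : ∀ x, 2 * n x ∈ [(-2 : ℤ), 0, 2] := by
      intro x
      have h1 : n x * n x ≤ 2 := hsq ▸
        Finset.single_le_sum (f := fun x => n x * n x) (fun i _ => mul_self_nonneg _)
          (Finset.mem_univ x)
      have h2 : -1 ≤ n x := by nlinarith
      have h3 : n x ≤ 1 := by nlinarith
      simp only [List.mem_cons, List.not_mem_nil, or_false]
      omega
    refine mem_cube hr ?_
    rw [hwn]
    exact ⟨hmem _, hmem _, hmem _, hmem _, hmem _, hmem _, hmem _, hmem _⟩
  · choose n hn' using h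
    obtain ⟨w, hw, hwn⟩ := fill (fun x => 2 * n x + 1) (fun x => by rw [hn']; push_cast; ring)
    have hr := norm_sum w hw
    refine ⟨w, List.mem_append_right _ (List.mem_filter.2 ⟨?_, hr⟩), hw⟩
    -- Each `(n + 1/2)²` is at least `1/4` and eight of them add up to `2`.
    have hsq : ∑ x, n x * (n x + 1) = 0 := by
      simp only [dotProduct, hn', sum_B3] at hn
      have : ((∑ x, n x * (n x + 1) : ℤ) : ℚ) = 0 := by
        simp only [sum_B3]
        push_cast
        linarith
      exact_mod_cast this
    have hnn : ∀ k : ℤ, 0 ≤ k * (k + 1) := by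
      intro k
      rcases le_or_gt 0 k with hk | hk <;> nlinarith
    have hmem : ∀ x, 2 * n x + 1 ∈ [(-1 : ℤ), 1] := by
      intro x
      have h1 := (Finset.sum_eq_zero_iff_of_nonneg (fun i _ => hnn (n i))).1 hsq x
        (Finset.mem_univ x)
      simp only [List.mem_cons, List.not_mem_nil, or_false]
      rcases mul_eq_zero.1 h1 with h | h <;> omega
    refine mem_cube hr ?_
    rw [hwn]
    exact ⟨hmem _, hmem _, hmem _, hmem _, hmem _, hmem _, hmem _, hmem _⟩

/-! ### Reflections -/

/-- The reflection in a vector `r` of norm `2`. -/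
def reflMat (r : B3 → ℚ) : Matrix B3 B3 ℚ := 1 - vecMulVec r r

theorem refl_mulVec (r v : B3 → ℚ) : reflMat r *ᵥ v = v - (r ⬝ᵥ v) • r := by
  rw [reflMat, sub_mulVec, one_mulVec, vecMulVec_mulVec]
  simp

theorem refl_neg (r : B3 → ℚ) : reflMat (-r) = reflMat r := by
  simp [reflMat]

theorem refl_transpose (r : B3 → ℚ) : (reflMat r)ᵀ = reflMat r := by
  simp [reflMat, transpose_vecMulVec]

theorem refl_mul_self {r : B3 → ℚ} (hr : r ⬝ᵥ r = 2) : reflMat r * reflMat r = 1 := by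
  apply Matrix.toLin'.injective
  ext1 x
  ext1
  simp only [LinearMap.comp_apply, toLin'_apply, ← mulVec_mulVec, refl_mulVec, one_mulVec,
    dotProduct_sub, dotProduct_smul, hr, smul_eq_mul]
  module

theorem root_norm {v : V8} (hv : v ∈ roots) : v.toVec ⬝ᵥ v.toVec = 2 := by
  rw [toVec_dot, (roots_parity v hv).2.2.2.2.2.2.2.2]; norm_num

/-- `reflMat r` is a product of gates of which at most one is a Toffoli gate. -/
def Good (r : B3 → ℚ) : Prop :=
  ∃ l : List (Matrix B3 B3 ℚ), (∀ g ∈ l, g ∈ SigmaD) ∧ l.prod = reflMat r ∧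
    List.countP (fun g => decide (IsToffoli g)) l ≤ 1

theorem Good.neg {r : B3 → ℚ} (h : Good (-r)) : Good r := by
  rwa [Good, refl_neg] at h

theorem Good.of_mulVec {r : B3 → ℚ} {g : Matrix B3 B3 ℚ} (hmem : g ∈ SigmaD)
    (hT : ¬ IsToffoli g) (hsymm : gᵀ = g) (hsq : g * g = 1) (h : Good (g *ᵥ r)) : Good r := by
  obtain ⟨l, hl, hp, hc⟩ := h
  refine ⟨g :: (l ++ [g]), ?_, ?_, ?_⟩
  · simp only [List.mem_cons, List.mem_append, List.not_mem_nil, or_false]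
    rintro x (rfl | h | rfl)
    exacts [hmem, hl x h, hmem]
  · have hv : (g *ᵥ r) ᵥ* g = r := by
      conv_lhs => rw [← hsymm]
      rw [vecMul_transpose, hsymm, mulVec_mulVec, hsq, one_mulVec]
    simp only [List.prod_cons, List.prod_append, List.prod_nil, mul_one, hp, reflMat]
    rw [sub_mul, mul_sub, one_mul, hsq, vecMulVec_mul, mul_vecMulVec, hv, mulVec_mulVec, hsq,
      one_mulVec]
  · simpa [List.countP_cons, List.countP_append, hT] using hc

/-! ### Gates acting on roots -/

/-- A non-Toffoli gate that is a symmetric involution, with its action on doubled coordinates. -/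
structure Gate where
  mat : Matrix B3 B3 ℚ
  act : V8 → V8
  mem : mat ∈ SigmaD
  not_toffoli : ¬ IsToffoli mat
  symm : matᵀ = mat
  sq : mat * mat = 1
  spec : ∀ v, mat *ᵥ v.toVec = (act v).toVec

theorem X_mulVec (j : Fin 3) (w : B3 → ℚ) (x : B3) : (Xmat j *ᵥ w) x = w (flipBit j x) := by
  have hinv : ∀ j, Function.Involutive (flipBit j) := by
    unfold Function.Involutive
    decide +kernel
  have h : ∀ y : B3, x = flipBit j y ↔ flipBit j x = y := fun y => (hinv j).eq_iff.symm
  simp [mulVec, dotProduct, Xmat, h]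

theorem CX_mulVec (j k : Fin 3) (hjk : j ≠ k) (w : B3 → ℚ) (x : B3) :
    (CXmat j k *ᵥ w) x = w (if x j = 1 then flipBit k x else x) := by
  have hinv : ∀ j k : Fin 3, j ≠ k →
      Function.Involutive fun x : B3 => if x j = 1 then flipBit k x else x := by
    unfold Function.Involutive
    decide +kernel
  have h : ∀ y : B3, x = (if y j = 1 then flipBit k y else y) ↔
      (if x j = 1 then flipBit k x else x) = y := fun y => (hinv j k hjk).eq_iff.symm
  simp only [mulVec, dotProduct, CXmat, of_apply, h]
  simp

theorem Z_mulVec (j : Fin 3) (w : B3 → ℚ) (x : B3) :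
    (Zmat j *ᵥ w) x = (if x j = 1 then -1 else 1) * w x := by
  simp [mulVec, dotProduct, Zmat]

theorem CZ_mulVec (j k : Fin 3) (w : B3 → ℚ) (x : B3) :
    (CZmat j k *ᵥ w) x = (if x j = 1 ∧ x k = 1 then -1 else 1) * w x := by
  simp [mulVec, dotProduct, CZmat]

theorem X_props : ∀ j, ¬ IsToffoli (Xmat j) ∧ (Xmat j)ᵀ = Xmat j ∧ Xmat j * Xmat j = 1 := by
  decide +kernel

theorem CX_props : ∀ j k, j ≠ k → ¬ IsToffoli (CXmat j k) ∧ (CXmat j k)ᵀ = CXmat j k ∧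
    CXmat j k * CXmat j k = 1 := by
  decide +kernel

theorem Z_props : ∀ j, ¬ IsToffoli (Zmat j) ∧ (Zmat j)ᵀ = Zmat j ∧ Zmat j * Zmat j = 1 := by
  decide +kernel

theorem CZ_props : ∀ j k, j < k → ¬ IsToffoli (CZmat j k) ∧ (CZmat j k)ᵀ = CZmat j k ∧
    CZmat j k * CZmat j k = 1 := by
  decide +kernel

theorem K_props : ¬ IsToffoli (Kmat 0 1) ∧ (Kmat 0 1)ᵀ = Kmat 0 1 ∧
    Kmat 0 1 * Kmat 0 1 = 1 := by
  decide +kernel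

/-- The gate `X_j` with its action `f` on doubled coordinates. -/
def gX (j : Fin 3) (f : V8 → V8) (hf : ∀ v x, v.coord (flipBit j x) = (f v).coord x) : Gate where
  mat := Xmat j
  act := f
  mem := Or.inl ⟨j, rfl⟩
  not_toffoli := (X_props j).1
  symm := (X_props j).2.1
  sq := (X_props j).2.2
  spec v := by ext x; rw [X_mulVec]; simp only [toVec, hf]

/-- The gate `CX_{j,k}` with its action `f` on doubled coordinates. -/
def gCX (j k : Fin 3) (hjk : j ≠ k) (f : V8 → V8)
    (hf : ∀ v x, v.coord (if x j = 1 then flipBit k x else x) = (f v).coord x) : Gate where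
  mat := CXmat j k
  act := f
  mem := Or.inr (Or.inl ⟨j, k, hjk, rfl⟩)
  not_toffoli := (CX_props j k hjk).1
  symm := (CX_props j k hjk).2.1
  sq := (CX_props j k hjk).2.2
  spec v := by ext x; rw [CX_mulVec j k hjk]; simp only [toVec, hf]

/-- The gate `Z_j` with its action `f` on doubled coordinates. -/
def gZ (j : Fin 3) (f : V8 → V8)
    (hf : ∀ v x, (if x j = 1 then -1 else 1) * v.coord x = (f v).coord x) : Gate where
  mat := Zmat j
  act := f
  mem := Or.inr (Or.inr (Or.inr (Or.inl ⟨j, rfl⟩)))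
  not_toffoli := (Z_props j).1
  symm := (Z_props j).2.1
  sq := (Z_props j).2.2
  spec v := by ext x; rw [Z_mulVec]; simp only [toVec, ← hf]; push_cast; ring

/-- The gate `CZ_{j,k}` with its action `f` on doubled coordinates. -/
def gCZ (j k : Fin 3) (hjk : j < k) (f : V8 → V8)
    (hf : ∀ v x, (if x j = 1 ∧ x k = 1 then -1 else 1) * v.coord x = (f v).coord x) : Gate where
  mat := CZmat j k
  act := f
  mem := Or.inr (Or.inr (Or.inr (Or.inr (Or.inl ⟨j, k, hjk, rfl⟩))))
  not_toffoli := (CZ_props j k hjk).1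
  symm := (CZ_props j k hjk).2.1
  sq := (CZ_props j k hjk).2.2
  spec v := by ext x; rw [CZ_mulVec]; simp only [toVec, ← hf]; push_cast; ring

/-- Gates connecting all integral roots, up to sign, with `e₁₁₀ - e₁₁₁`. -/
def intGates : List Gate :=
  [gCX 1 0 (by decide) (fun v => ⟨v.a0, v.a1, v.a6, v.a7, v.a4, v.a5, v.a2, v.a3⟩)
      (fun v => forall_B3 fun a b c => by fin_cases a <;> fin_cases b <;> fin_cases c <;> rfl),
   gCX 0 2 (by decide) (fun v => ⟨v.a0, v.a1, v.a2, v.a3, v.a5, v.a4, v.a7, v.a6⟩)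
      (fun v => forall_B3 fun a b c => by fin_cases a <;> fin_cases b <;> fin_cases c <;> rfl),
   gCX 2 1 (by decide) (fun v => ⟨v.a0, v.a3, v.a2, v.a1, v.a4, v.a7, v.a6, v.a5⟩)
      (fun v => forall_B3 fun a b c => by fin_cases a <;> fin_cases b <;> fin_cases c <;> rfl),
   gCX 2 0 (by decide) (fun v => ⟨v.a0, v.a5, v.a2, v.a7, v.a4, v.a1, v.a6, v.a3⟩)
      (fun v => forall_B3 fun a b c => by fin_cases a <;> fin_cases b <;> fin_cases c <;> rfl),
   gZ 2 (fun v => ⟨v.a0, -v.a1, v.a2, -v.a3, v.a4, -v.a5, v.a6, -v.a7⟩)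
      (fun v => forall_B3 fun a b c => by
        fin_cases a <;> fin_cases b <;> fin_cases c <;> simp [coord]),
   gX 1 (fun v => ⟨v.a2, v.a3, v.a0, v.a1, v.a6, v.a7, v.a4, v.a5⟩)
      (fun v => forall_B3 fun a b c => by fin_cases a <;> fin_cases b <;> fin_cases c <;> rfl),
   gX 0 (fun v => ⟨v.a4, v.a5, v.a6, v.a7, v.a0, v.a1, v.a2, v.a3⟩)
      (fun v => forall_B3 fun a b c => by fin_cases a <;> fin_cases b <;> fin_cases c <;> rfl)]

/-- Diagonal gates connecting all half-integral roots, up to sign, with the all-halves root: the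
Boolean functions of degree at most `2` on three bits are those of even weight. -/
def halfGates : List Gate :=
  [gZ 0 (fun v => ⟨v.a0, v.a1, v.a2, v.a3, -v.a4, -v.a5, -v.a6, -v.a7⟩)
      (fun v => forall_B3 fun a b c => by
        fin_cases a <;> fin_cases b <;> fin_cases c <;> simp [coord]),
   gZ 1 (fun v => ⟨v.a0, v.a1, -v.a2, -v.a3, v.a4, v.a5, -v.a6, -v.a7⟩)
      (fun v => forall_B3 fun a b c => by
        fin_cases a <;> fin_cases b <;> fin_cases c <;> simp [coord]),
   gZ 2 (fun v => ⟨v.a0, -v.a1, v.a2, -v.a3, v.a4, -v.a5, v.a6, -v.a7⟩)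
      (fun v => forall_B3 fun a b c => by
        fin_cases a <;> fin_cases b <;> fin_cases c <;> simp [coord]),
   gCZ 0 1 (by decide) (fun v => ⟨v.a0, v.a1, v.a2, v.a3, v.a4, v.a5, -v.a6, -v.a7⟩)
      (fun v => forall_B3 fun a b c => by
        fin_cases a <;> fin_cases b <;> fin_cases c <;> simp [coord]),
   gCZ 0 2 (by decide) (fun v => ⟨v.a0, v.a1, v.a2, v.a3, v.a4, -v.a5, v.a6, -v.a7⟩)
      (fun v => forall_B3 fun a b c => by
        fin_cases a <;> fin_cases b <;> fin_cases c <;> simp [coord]),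
   gCZ 1 2 (by decide) (fun v => ⟨v.a0, v.a1, v.a2, -v.a3, v.a4, v.a5, v.a6, -v.a7⟩)
      (fun v => forall_B3 fun a b c => by
        fin_cases a <;> fin_cases b <;> fin_cases c <;> simp [coord])]

/-- Whether applying some of the gates of the list, in order, turns `v` into `±t`. -/
def reach (t : V8) : List Gate → V8 → Bool
  | [], v => decide (v = t) || decide (v.neg = t)
  | g :: gs, v => reach t gs v || reach t gs (g.act v)

theorem good_of_reach {t : V8} (ht : Good t.toVec) :
    ∀ (gs : List Gate) (v : V8), reach t gs v = true → Good v.toVec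
  | [], v, h => by
    simp only [reach, Bool.or_eq_true, decide_eq_true_eq] at h
    rcases h with rfl | rfl
    · exact ht
    · rw [toVec_neg] at ht
      exact ht.neg
  | g :: gs, v, h => by
    simp only [reach, Bool.or_eq_true] at h
    rcases h with h | h
    · exact good_of_reach ht gs v h
    · refine Good.of_mulVec g.mem g.not_toffoli g.symm g.sq ?_
      rw [g.spec]
      exact good_of_reach ht gs _ h

theorem good_toffoli : Good (⟨0, 0, 0, 0, 0, 0, 2, -2⟩ : V8).toVec := by
  refine ⟨[CCXmat 0 1], ?_, ?_, List.countP_le_length⟩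
  · simp only [List.mem_singleton, forall_eq]
    exact Or.inr (Or.inr (Or.inl ⟨0, 1, by decide, rfl⟩))
  · rw [List.prod_singleton]
    decide +kernel

theorem int_reach : ∀ v ∈ intRoots, reach ⟨0, 0, 0, 0, 0, 0, 2, -2⟩ intGates v = true := by
  decide +kernel

theorem half_reach : ∀ v ∈ halfRoots, reach ⟨1, 1, 1, 1, 1, 1, 1, 1⟩ halfGates v = true := by
  decide +kernel

theorem good_of_mem_roots {v : V8} (hv : v ∈ roots) : Good v.toVec := by
  have hint : ∀ v ∈ intRoots, Good v.toVec := fun v hv =>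
    good_of_reach good_toffoli _ _ (int_reach v hv)
  rcases List.mem_append.1 hv with hv | hv
  · exact hint v hv
  · refine good_of_reach ?_ _ _ (half_reach v hv)
    refine Good.of_mulVec (g := Kmat 0 1)
      (Or.inr (Or.inr (Or.inr (Or.inr (Or.inr (Or.inl rfl))))))
      K_props.1 K_props.2.1 K_props.2.2 ?_
    have h : Kmat 0 1 *ᵥ (⟨1, 1, 1, 1, 1, 1, 1, 1⟩ : V8).toVec =
        (⟨2, 2, 0, 0, 0, 0, 0, 0⟩ : V8).toVec := by decide +kernel
    rw [h]
    exact hint _ (by decide +kernel)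

/-! ### Factorization into reflections -/

/-- Orthogonal matrices mapping `E₈` into itself. -/
def PresE8 (M : Matrix B3 B3 ℚ) : Prop := Mᵀ * M = 1 ∧ ∀ v ∈ E8, M *ᵥ v ∈ E8

theorem PresE8.dot {M : Matrix B3 B3 ℚ} (hM : PresE8 M) (v w : B3 → ℚ) :
    (M *ᵥ v) ⬝ᵥ (M *ᵥ w) = v ⬝ᵥ w := by
  rw [dotProduct_mulVec, ← mulVec_transpose, mulVec_mulVec, hM.1, one_mulVec]

theorem PresE8.exists_root {M : Matrix B3 B3 ℚ} (hM : PresE8 M) {v : V8} (hv : v ∈ roots) :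
    ∃ w ∈ roots, M *ᵥ v.toVec = w.toVec :=
  _root_.exists_root (hM.2 _ (toVec_mem_E8 hv)) (by rw [hM.dot, root_norm hv])

theorem PresE8.refl_mul {M : Matrix B3 B3 ℚ} (hM : PresE8 M) {a : V8} (ha : a ∈ roots) :
    PresE8 (reflMat a.toVec * M) := by
  refine ⟨?_, fun v hv => ?_⟩
  · rw [transpose_mul, refl_transpose, Matrix.mul_assoc, ← Matrix.mul_assoc (reflMat _),
      refl_mul_self (root_norm ha), Matrix.one_mul, hM.1]
  · rw [← mulVec_mulVec, refl_mulVec]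
    obtain ⟨k, hk⟩ := E8_dot_int (toVec_mem_E8 ha) (hM.2 v hv)
    rw [hk]
    exact E8_sub_smul (hM.2 v hv) (toVec_mem_E8 ha) k

/-- The roots orthogonal to `pre` with negative inner product with `r`. -/
def separators (pre : List V8) (r : V8) : List V8 :=
  roots.filter fun a => decide (a.dot r ≤ -4) && pre.all fun p => decide (a.dot p = 0)

/-- For every root `w ≠ r` having the same inner products as `r` with the roots in `pre`, some
root orthogonal to `pre` is negative on `r` and positive on `w`. The bounds `±4` are `±1` in terms
of the vectors themselves, both factors of the inner product being doubled. -/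
def stepOK (pre : List V8) (r : V8) : Bool :=
  decide (r ∈ roots) && roots.all fun w =>
    !(pre.all fun p => decide (w.dot p = r.dot p)) || decide (w = r) ||
      (decide (w.dot r ≤ 4) && (separators pre r).any fun a => decide (4 ≤ a.dot w))

theorem stepOK_spec {pre : List V8} {r : V8} (h : stepOK pre r = true) : r ∈ roots ∧
    ∀ w ∈ roots, (∀ p ∈ pre, w.dot p = r.dot p) → w = r ∨
      (w.dot r ≤ 4 ∧ ∃ a ∈ roots, a.dot w * a.dot r ≤ -16 ∧ ∀ p ∈ pre, a.dot p = 0) := by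
  simp only [stepOK, Bool.and_eq_true, decide_eq_true_eq, List.all_eq_true] at h
  refine ⟨h.1, fun w hw hp => ?_⟩
  have h2 := h.2 w hw
  have h3 : (pre.all fun p => decide (w.dot p = r.dot p)) = true := by
    simpa [List.all_eq_true] using hp
  rw [h3] at h2
  simp only [Bool.not_true, Bool.false_or, Bool.or_eq_true, Bool.and_eq_true, decide_eq_true_eq,
    List.any_eq_true, separators, List.mem_filter, List.all_eq_true] at h2
  rcases h2 with h2 | ⟨h4, a, ⟨ha, har, hap⟩, haw⟩
  · exact Or.inl h2
  · exact Or.inr ⟨h4, a, ha, by nlinarith, hap⟩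

/-- If `M r · r ≥ 2 - n`, then `n` reflections suffice to fix `r` as well. -/
theorem fix_one {pre : List V8} {r : V8} (h : stepOK pre r = true) (n : ℕ) :
    ∀ M : Matrix B3 B3 ℚ, PresE8 M → (∀ p ∈ pre, M *ᵥ p.toVec = p.toVec) →
      2 - (n : ℚ) ≤ (M *ᵥ r.toVec) ⬝ᵥ r.toVec →
      ∃ (L : List V8) (N : Matrix B3 B3 ℚ), (∀ a ∈ L, a ∈ roots) ∧ L.length ≤ n ∧
        M = (L.map fun a => reflMat a.toVec).prod * N ∧ PresE8 N ∧
        ∀ p ∈ r :: pre, N *ᵥ p.toVec = p.toVec := by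
  obtain ⟨hr, hstep⟩ := stepOK_spec h
  induction n with
  | zero =>
    intro M hM hfix hd
    obtain ⟨w, hw, hMw⟩ := hM.exists_root hr
    have hdots : ∀ p ∈ pre, w.dot p = r.dot p := by
      intro p hp
      have := hM.dot r.toVec p.toVec
      rw [hMw, hfix p hp, toVec_dot, toVec_dot] at this
      have h' : (w.dot p : ℚ) = r.dot p := by linarith
      exact_mod_cast h'
    refine ⟨[], M, by simp, by simp, by simp, hM, ?_⟩
    rcases hstep w hw hdots with rfl | ⟨h4, -⟩
    · simpa [List.forall_mem_cons] using ⟨hMw, hfix⟩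
    · rw [hMw, toVec_dot] at hd
      have : (w.dot r : ℚ) ≤ 4 := by exact_mod_cast h4
      norm_num at hd
      linarith
  | succ n ih =>
    intro M hM hfix hd
    obtain ⟨w, hw, hMw⟩ := hM.exists_root hr
    have hdots : ∀ p ∈ pre, w.dot p = r.dot p := by
      intro p hp
      have := hM.dot r.toVec p.toVec
      rw [hMw, hfix p hp, toVec_dot, toVec_dot] at this
      have h' : (w.dot p : ℚ) = r.dot p := by linarith
      exact_mod_cast h'
    rcases hstep w hw hdots with rfl | ⟨-, a, ha, hneg, horth⟩
    · exact ⟨[], M, by simp, by simp, by simp, hM,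
        by simpa [List.forall_mem_cons] using ⟨hMw, hfix⟩⟩
    · obtain ⟨L, N, hL, hlen, hprod, hN, hNfix⟩ := ih (reflMat a.toVec * M) (hM.refl_mul ha)
        (fun p hp => by
          rw [← mulVec_mulVec, hfix p hp, refl_mulVec, toVec_dot, horth p hp]; simp)
        (by
          have hneg' : (a.dot w : ℚ) * a.dot r ≤ -16 := by exact_mod_cast hneg
          rw [hMw] at hd
          rw [← mulVec_mulVec, hMw, refl_mulVec, sub_dotProduct, smul_dotProduct, toVec_dot a w,
            toVec_dot a r, smul_eq_mul]
          push_cast at hd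
          linarith)
      refine ⟨a :: L, N, by simpa [List.forall_mem_cons] using ⟨ha, hL⟩, by simpa using hlen, ?_,
        hN, hNfix⟩
      rw [List.map_cons, List.prod_cons, Matrix.mul_assoc, ← hprod, ← Matrix.mul_assoc,
        refl_mul_self (root_norm ha), Matrix.one_mul]

/-- `stepOK` at every place of the list `rest`, preceded by `pre`. -/
def chainOK : List V8 → List V8 → Bool
  | _, [] => true
  | pre, r :: rest => stepOK pre r && chainOK (r :: pre) rest

theorem fix_all : ∀ (rest pre : List V8), chainOK pre rest = true →
    ∀ M : Matrix B3 B3 ℚ, PresE8 M → (∀ p ∈ pre, M *ᵥ p.toVec = p.toVec) →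
      ∃ (L : List V8) (N : Matrix B3 B3 ℚ), (∀ a ∈ L, a ∈ roots) ∧ L.length ≤ 4 * rest.length ∧
        M = (L.map fun a => reflMat a.toVec).prod * N ∧
        ∀ p, p ∈ pre ∨ p ∈ rest → N *ᵥ p.toVec = p.toVec
  | [], pre, _, M, _, hfix => ⟨[], M, by simp, by simp, by simp, by simpa using hfix⟩
  | r :: rest, pre, h, M, hM, hfix => by
    simp only [chainOK, Bool.and_eq_true] at h
    have hge : 2 - ((4 : ℕ) : ℚ) ≤ (M *ᵥ r.toVec) ⬝ᵥ r.toVec := by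
      obtain ⟨hr, -⟩ := stepOK_spec h.1
      -- Expand `0 ≤ |M r + r|²`, where `M r` and `r` both have norm `2`.
      have h0 : 0 ≤ (M *ᵥ r.toVec + r.toVec) ⬝ᵥ (M *ᵥ r.toVec + r.toVec) :=
        Finset.sum_nonneg fun i _ => mul_self_nonneg _
      rw [add_dotProduct, dotProduct_add, dotProduct_add, hM.dot, root_norm hr,
        dotProduct_comm r.toVec] at h0
      push_cast
      linarith
    obtain ⟨L, N, hL, hlen, hprod, hN, hNfix⟩ := fix_one h.1 4 M hM hfix hge
    obtain ⟨L', N', hL', hlen', hprod', hfix'⟩ := fix_all rest (r :: pre) h.2 N hN hNfix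
    refine ⟨L ++ L', N', ?_, ?_, ?_, ?_⟩
    · intro a ha
      exact (List.mem_append.1 ha).elim (hL a) (hL' a)
    · simp only [List.length_append, List.length_cons]; omega
    · rw [List.map_append, List.prod_append, Matrix.mul_assoc, ← hprod', hprod]
    · rintro p (hp | hp)
      · exact hfix' p (Or.inl (List.mem_cons_of_mem _ hp))
      · rcases List.mem_cons.1 hp with rfl | hp
        · exact hfix' _ (Or.inl List.mem_cons_self)
        · exact hfix' p (Or.inr hp)

/-- The spanning roots `e₀ ± e₁`, `e₁ + e₂`, …, `e₁ + e₆` and the all-halves root. -/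
def chain : List V8 :=
  [⟨2, 2, 0, 0, 0, 0, 0, 0⟩, ⟨2, -2, 0, 0, 0, 0, 0, 0⟩, ⟨0, 2, 2, 0, 0, 0, 0, 0⟩,
   ⟨0, 2, 0, 2, 0, 0, 0, 0⟩, ⟨0, 2, 0, 0, 2, 0, 0, 0⟩, ⟨0, 2, 0, 0, 0, 2, 0, 0⟩,
   ⟨0, 2, 0, 0, 0, 0, 2, 0⟩, ⟨1, 1, 1, 1, 1, 1, 1, 1⟩]

theorem chain_ok : chainOK [] chain = true := by
  decide +kernel

theorem eq_one_of_fix {N : Matrix B3 B3 ℚ} (h : ∀ p ∈ chain, N *ᵥ p.toVec = p.toVec) :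
    N = 1 := by
  simp only [chain, List.forall_mem_cons] at h
  obtain ⟨h1, h2, h3, h4, h5, h6, h7, h8, -⟩ := h
  ext x y
  have f1 := congrFun h1 x
  have f2 := congrFun h2 x
  have f3 := congrFun h3 x
  have f4 := congrFun h4 x
  have f5 := congrFun h5 x
  have f6 := congrFun h6 x
  have f7 := congrFun h7 x
  have f8 := congrFun h8 x
  clear h1 h2 h3 h4 h5 h6 h7 h8
  simp only [mulVec, dotProduct, sum_B3, toVec, coord, Matrix.cons_val] at f1 f2 f3 f4 f5 f6 f7 f8
  revert x y
  refine forall_B3 fun a b c => forall_B3 fun a' b' c' => ?_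
  fin_cases a <;> fin_cases b <;> fin_cases c <;> intro f1 f2 f3 f4 f5 f6 f7 f8 <;>
    simp at f1 f2 f3 f4 f5 f6 f7 f8 <;>
    fin_cases a' <;> fin_cases b' <;> fin_cases c' <;>
    simp <;> linarith

theorem exists_reflections {M : Matrix B3 B3 ℚ} (hM : PresE8 M) :
    ∃ L : List V8, (∀ a ∈ L, a ∈ roots) ∧ L.length ≤ 32 ∧
      (L.map fun a => reflMat a.toVec).prod = M := by
  obtain ⟨L, N, hL, hlen, hprod, hfix⟩ := fix_all chain [] chain_ok M hM (by simp)
  have hN : N = 1 := eq_one_of_fix fun p hp => hfix p (Or.inr hp)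
  exact ⟨L, hL, hlen, by rw [hprod, hN, Matrix.mul_one]⟩

theorem exists_gates : ∀ L : List V8, (∀ a ∈ L, a ∈ roots) →
    ∃ l : List (Matrix B3 B3 ℚ), (∀ g ∈ l, g ∈ SigmaD) ∧
      l.prod = (L.map fun a => reflMat a.toVec).prod ∧
      List.countP (fun g => decide (IsToffoli g)) l ≤ L.length
  | [], _ => ⟨[], by simp, by simp, by simp⟩
  | a :: L, h => by
    obtain ⟨l, hl, hp, hc⟩ := exists_gates L fun b hb => h b (List.mem_cons_of_mem _ hb)
    obtain ⟨l', hl', hp', hc'⟩ := good_of_mem_roots (h a List.mem_cons_self)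
    refine ⟨l' ++ l, ?_, ?_, ?_⟩
    · intro g hg
      exact (List.mem_append.1 hg).elim (hl' g) (hl g)
    · rw [List.prod_append, List.map_cons, List.prod_cons, hp, hp']
    · rw [List.countP_append, List.length_cons]; omega

/-- Every matrix in `W(E₈)` is a product of a finite list of gates from
`Σ_D`, at most `120` of which are Toffoli gates. -/
theorem WE8_toffoli_count_le_120 (M : Matrix B3 B3 ℚ) (hM : InWE8 M) :
    ∃ l : List (Matrix B3 B3 ℚ), (∀ g ∈ l, g ∈ SigmaD) ∧ l.prod = M ∧
      List.countP (fun g => decide (IsToffoli g)) l ≤ 120 := by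
  obtain ⟨L, hL, hlen, hprod⟩ := exists_reflections ⟨hM.1.1, fun v hv => hM.2.mapsTo hv⟩
  obtain ⟨l, hl, hp, hc⟩ := exists_gates L hL
  exact ⟨l, hl, hp.trans hprod, by omega⟩
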